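/- Let 1 ≤ d < r and let U, V ∈ Gr_{d,r}. If U ≠ V then every morphism X_U → X_V is zero; consequently X_U and X_V are isomorphic if and only if U = V. -/

import Mathlib

open Module LinearMap

universe u

/-- A finite-dimensional representation of the `r`-Kronecker quiver `Γ_r` over `k`:
two finite-dimensional `k`-vector spaces `M₁`, `M₂` and `r` linear maps `M₁ → M₂`. -/
structure KRep (k : Type u) [Field k] (r : ℕ) : Type (u + 1) where
  V1 : Type u
  V2 : Type u
  [addV1 : AddCommGroup V1]
  [addV2 : AddCommGroup V2]
  [modV1 : Module k V1]
  [modV2 : Module k V2]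
  [finV1 : FiniteDimensional k V1]
  [finV2 : FiniteDimensional k V2]
  f : Fin r → V1 →ₗ[k] V2

attribute [instance] KRep.addV1 KRep.addV2 KRep.modV1 KRep.modV2 KRep.finV1 KRep.finV2

variable {k : Type u} [Field k] {r : ℕ}

/-- For `α ∈ k^r`, the operator `x^M_α = ∑ i, αᵢ • M(γᵢ) : M₁ → M₂`. -/
def KRep.x (M : KRep k r) (α : Fin r → k) : M.V1 →ₗ[k] M.V2 :=
  ∑ i, α i • M.f i

/-- The space `Hom(M, N)` of morphisms of representations, as a `k`-submodule of the
pairs of linear maps `(f₁ : M₁ → N₁, f₂ : M₂ → N₂)`; membership is the condition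
`f₂ ∘ M(γᵢ) = N(γᵢ) ∘ f₁` for all `i`. -/
def KHom (M N : KRep k r) : Submodule k ((M.V1 →ₗ[k] N.V1) × (M.V2 →ₗ[k] N.V2)) where
  carrier := {p | ∀ i, p.2 ∘ₗ M.f i = N.f i ∘ₗ p.1}
  add_mem' := by
    intro a b ha hb i
    simp only [Prod.snd_add, Prod.fst_add, LinearMap.add_comp, LinearMap.comp_add, ha i, hb i]
  zero_mem' := by intro i; simp
  smul_mem' := by
    intro c a ha i
    simp only [Prod.smul_snd, Prod.smul_fst, LinearMap.smul_comp, LinearMap.comp_smul, ha i]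

/-- The representation `X_U` attached to a subspace `U ⊆ k^r`:
`(X_U)₁ = k`, `(X_U)₂ = k^r/U`, and `X_U(γᵢ)(c) = c · (eᵢ + U)`. -/
def XU (U : Submodule k (Fin r → k)) : KRep k r where
  V1 := k
  V2 := (Fin r → k) ⧸ U
  f := fun i => LinearMap.toSpanSingleton k _ (Submodule.Quotient.mk (Pi.single i 1))

/-- The `M₁`-part of the socle: `{m ∈ M₁ : x^M_u(m) = 0 for all u ∈ U}`. -/
def KRep.socKer (M : KRep k r) (U : Submodule k (Fin r → k)) : Submodule k M.V1 :=
  ⨅ u ∈ U, LinearMap.ker (M.x u)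

/-- `Soc_U(M) = {m ∈ M₁ : x^M_u(m) = 0 ∀ u ∈ U} ⊕ M₂`, as a subspace of `M₁ ⊕ M₂`. -/
def KRep.soc (M : KRep k r) (U : Submodule k (Fin r → k)) : Submodule k (M.V1 × M.V2) :=
  (M.socKer U).prod ⊤

/-- `Rad_U(M) = ∑_{u ∈ U} x^M_u(M₁) ⊆ M₂`. -/
def KRep.rad (M : KRep k r) (U : Submodule k (Fin r → k)) : Submodule k M.V2 :=
  ⨆ u ∈ U, LinearMap.range (M.x u)

/-- Direct sum of two representations. -/
def KRep.sum (M N : KRep k r) : KRep k r where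
  V1 := M.V1 × N.V1
  V2 := M.V2 × N.V2
  f := fun i => (M.f i).prodMap (N.f i)

/-- Isomorphism of representations. -/
def KIso (M N : KRep k r) : Prop :=
  ∃ (e1 : M.V1 ≃ₗ[k] N.V1) (e2 : M.V2 ≃ₗ[k] N.V2),
    ∀ i, (e2 : M.V2 →ₗ[k] N.V2) ∘ₗ M.f i = N.f i ∘ₗ (e1 : M.V1 →ₗ[k] N.V1)

/-- A representation is nonzero if its dimension vector is not `(0,0)`. -/
def KRep.Nonzero (M : KRep k r) : Prop :=
  finrank k M.V1 ≠ 0 ∨ finrank k M.V2 ≠ 0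

/-- A representation is indecomposable if it is nonzero and not isomorphic to a direct
sum of two nonzero representations. -/
def KRep.Indecomposable (M : KRep k r) : Prop :=
  M.Nonzero ∧ ∀ A B : KRep k r, A.Nonzero → B.Nonzero → ¬ KIso M (A.sum B)

/-- A representation is simple if its dimension vector is `(1,0)` or `(0,1)`. -/
def KRep.IsSimple (M : KRep k r) : Prop :=
  (finrank k M.V1 = 1 ∧ finrank k M.V2 = 0) ∨ (finrank k M.V1 = 0 ∧ finrank k M.V2 = 1)

/-- `M` has constant `d`-socle rank: `dim_k Soc_U(M)` is independent of `U ∈ Gr_{d,r}`. -/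
def KRep.ConstSocRank (d : ℕ) (M : KRep k r) : Prop :=
  ∃ c : ℕ, ∀ U : Submodule k (Fin r → k), finrank k U = d → finrank k (M.soc U) = c

/-- `M` has the equal `d`-socle property: `Soc_U(M)` is independent of `U ∈ Gr_{d,r}`. -/
def KRep.ESP (d : ℕ) (M : KRep k r) : Prop :=
  ∀ U V : Submodule k (Fin r → k), finrank k U = d → finrank k V = d → M.soc U = M.soc V

/-- `M` has constant `d`-radical rank: `dim_k Rad_U(M)` is independent of `U ∈ Gr_{d,r}`. -/
def KRep.ConstRadRank (d : ℕ) (M : KRep k r) : Prop :=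
  ∃ c : ℕ, ∀ U : Submodule k (Fin r → k), finrank k U = d → finrank k (M.rad U) = c

/-- `M` has the equal `d`-radical property: `Rad_U(M)` is independent of `U ∈ Gr_{d,r}`. -/
def KRep.ERP (d : ℕ) (M : KRep k r) : Prop :=
  ∀ U V : Submodule k (Fin r → k), finrank k U = d → finrank k V = d → M.rad U = M.rad V

/-! Because `X_U` is generated by `1 ∈ (X_U)₁ = k`, subject to the relations `x_u(1) = 0` for
`u ∈ U`, it represents the functor `M ↦ {m ∈ M₁ : x_u(m) = 0 for all u ∈ U}`. For `M = X_V`,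
where `x_u(c) = c · (u + V)`, this space is `k` if `U ⊆ V` and `0` otherwise. Distinct subspaces
of equal dimension are not contained in one another, so they admit no nonzero morphism, and an
isomorphism `X_U ≅ X_V` forces both `U ⊆ V` and `V ⊆ U`. -/

theorem KRep.x_apply (M : KRep k r) (α : Fin r → k) (m : M.V1) :
    M.x α m = ∑ i, α i • M.f i m := by
  simp [KRep.x]

theorem KRep.x_single (M : KRep k r) (i : Fin r) : M.x (Pi.single i 1) = M.f i := by
  simp [KRep.x, Pi.single_apply]

section

variable {U V : Submodule k (Fin r → k)} {M N : KRep k r}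

theorem KRep.mem_socKer {m : M.V1} : m ∈ M.socKer U ↔ ∀ u ∈ U, M.x u m = 0 := by
  simp [KRep.socKer]

theorem XU_x_apply (α : Fin r → k) (c : k) : (XU U).x α c = c • U.mkQ α := by
  refine (KRep.x_apply (XU U) α c).trans ?_
  calc ∑ i, α i • c • U.mkQ (Pi.single i 1)
    _ = c • U.mkQ (∑ i, α i • Pi.single i 1) := by
      simp only [map_sum, map_smul, Finset.smul_sum, smul_comm c]
    _ = c • U.mkQ α := by rw [← pi_eq_sum_univ' α]

theorem mem_socKer_XU {c : k} : c ∈ (XU V).socKer U ↔ c = 0 ∨ U ≤ V :=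
  calc c ∈ (XU V).socKer U
    _ ↔ ∀ u ∈ U, (XU V).x u c = 0 := KRep.mem_socKer (M := XU V)
    _ ↔ ∀ u ∈ U, c • V.mkQ u = 0 := by simp only [XU_x_apply]; rfl
    _ ↔ c = 0 ∨ U ≤ V := by
      simp only [smul_eq_zero, V.mkQ_apply, Submodule.Quotient.mk_eq_zero, SetLike.le_def,
        forall_or_left]

theorem socKer_XU_eq_bot_iff : (XU V).socKer U = ⊥ ↔ ¬ U ≤ V := by
  refine (Submodule.eq_bot_iff _).trans ⟨fun h hUV => ?_, fun hUV c hc => ?_⟩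
  · exact one_ne_zero (α := k) (h (1 : k) (mem_socKer_XU (k := k).mpr (.inr hUV)))
  · exact (mem_socKer_XU (k := k).mp hc).resolve_right hUV

theorem map_x_of_mem_kHom {p : (M.V1 →ₗ[k] N.V1) × (M.V2 →ₗ[k] N.V2)}
    (hp : p ∈ KHom M N) (α : Fin r → k) (m : M.V1) : p.2 (M.x α m) = N.x α (p.1 m) := by
  have map_f (i : Fin r) : p.2 (M.f i m) = N.f i (p.1 m) := LinearMap.congr_fun (hp i) m
  simp only [KRep.x_apply, map_sum, map_smul, map_f]

theorem snd_mkQ_of_mem_kHom {p : (k →ₗ[k] M.V1) × (((Fin r → k) ⧸ U) →ₗ[k] M.V2)}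
    (hp : p ∈ KHom (XU U) M) (α : Fin r → k) : p.2 (U.mkQ α) = M.x α (p.1 1) := by
  rw [← one_smul k (U.mkQ α), ← XU_x_apply]
  exact map_x_of_mem_kHom hp α (1 : k)

theorem fst_one_mem_socKer_of_mem_kHom
    {p : (k →ₗ[k] M.V1) × (((Fin r → k) ⧸ U) →ₗ[k] M.V2)}
    (hp : p ∈ KHom (XU U) M) : p.1 1 ∈ M.socKer U := by
  refine KRep.mem_socKer.mpr fun u hu => ?_
  rw [← snd_mkQ_of_mem_kHom hp, U.mkQ_apply, (Submodule.Quotient.mk_eq_zero U).mpr hu, map_zero]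

/-- The linear map `k^r/U → M₂`, `α + U ↦ x_α(m)`, for `m ∈ M₁` annihilated by `x_u`, `u ∈ U`. -/
def socKerLift (m : M.socKer U) : ((Fin r → k) ⧸ U) →ₗ[k] M.V2 :=
  U.liftQ (Fintype.linearCombination k (M.f · m)) fun u hu =>
    (M.x_apply u m).symm.trans (KRep.mem_socKer.mp m.2 u hu)

theorem socKerLift_mkQ (m : M.socKer U) (α : Fin r → k) :
    socKerLift m (U.mkQ α) = M.x α m :=
  (M.x_apply α m).symm

theorem toSpanSingleton_socKerLift_mem_kHom (m : M.socKer U) :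
    (toSpanSingleton k M.V1 m, socKerLift m) ∈ KHom (XU U) M := by
  refine fun i => LinearMap.ext_ring ?_
  calc socKerLift m ((1 : k) • U.mkQ (Pi.single i 1))
    _ = M.f i m := by rw [one_smul, socKerLift_mkQ, KRep.x_single]
    _ = M.f i ((1 : k) • m) := by rw [one_smul]

/-- `X_U` represents the functor `M ↦ {m ∈ M₁ : x_u(m) = 0 for all u ∈ U}`: a morphism
`X_U → M` corresponds to the image of `1 ∈ k = (X_U)₁`. -/
def homXUEquivSocKer (U : Submodule k (Fin r → k)) (M : KRep k r) :
    KHom (XU U) M ≃ₗ[k] M.socKer U where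
  toFun p := ⟨p.1.1 (1 : k), fst_one_mem_socKer_of_mem_kHom p.2⟩
  map_add' _ _ := rfl
  map_smul' _ _ := rfl
  invFun m := ⟨(toSpanSingleton k M.V1 m, socKerLift m), toSpanSingleton_socKerLift_mem_kHom m⟩
  left_inv p := by
    refine Subtype.ext (Prod.ext (LinearMap.ext_ring (one_smul k _)) ?_)
    refine U.linearMap_qext (LinearMap.ext fun α => ?_)
    exact (socKerLift_mkQ _ α).trans (snd_mkQ_of_mem_kHom p.2 α).symm
  right_inv m := Subtype.ext (one_smul k m.1)

theorem kHom_XU_eq_bot_iff : KHom (XU U) M = ⊥ ↔ M.socKer U = ⊥ := by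
  rw [← Submodule.subsingleton_iff_eq_bot, ← Submodule.subsingleton_iff_eq_bot]
  exact (homXUEquivSocKer U M).toEquiv.subsingleton_congr

theorem KIso.refl (M : KRep k r) : KIso M M :=
  ⟨LinearEquiv.refl k _, LinearEquiv.refl k _, fun _ => rfl⟩

theorem KIso.symm : KIso M N → KIso N M := by
  rintro ⟨e1, e2, h⟩
  refine ⟨e1.symm, e2.symm, fun i => LinearMap.ext fun n => e2.symm_apply_eq.mpr ?_⟩
  simpa using (LinearMap.congr_fun (h i) (e1.symm n)).symm

theorem KIso.kHom_ne_bot [Nontrivial M.V1] : KIso M N → KHom M N ≠ ⊥ := by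
  rintro ⟨e1, e2, h⟩ hbot
  obtain ⟨m, hm⟩ := exists_ne (0 : M.V1)
  have hzero : ((e1 : M.V1 →ₗ[k] N.V1), (e2 : M.V2 →ₗ[k] N.V2)) = 0 :=
    (Submodule.eq_bot_iff _).mp hbot _ h
  exact hm (e1.map_eq_zero_iff.mp (LinearMap.congr_fun (congrArg Prod.fst hzero) m))

theorem KIso.le_of_XU (h : KIso (XU U) (XU V)) : U ≤ V := by
  have : Nontrivial (XU U).V1 := inferInstanceAs (Nontrivial k)
  by_contra hUV
  exact h.kHom_ne_bot (kHom_XU_eq_bot_iff.mpr (socKer_XU_eq_bot_iff.mpr hUV))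

end

theorem hom_XU_XV_eq_bot_of_ne_general (U V : Submodule k (Fin r → k)) :
    (KHom (XU U) (XU V) = ⊥ ↔ ¬ U ≤ V) ∧ (KIso (XU U) (XU V) ↔ U = V) := by
  refine ⟨kHom_XU_eq_bot_iff.trans socKer_XU_eq_bot_iff, fun h => ?_, ?_⟩
  · exact le_antisymm h.le_of_XU h.symm.le_of_XU
  · rintro rfl
    exact KIso.refl _

/-- Let `1 ≤ d < r` and `U, V ∈ Gr_{d,r}`. If `U ≠ V` then every
morphism `X_U → X_V` is zero; consequently `X_U ≅ X_V` if and only if `U = V`. -/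
theorem hom_XU_XV_eq_bot_of_ne (d : ℕ) (hd : 1 ≤ d) (hdr : d < r)
    (U V : Submodule k (Fin r → k)) (hU : finrank k U = d) (hV : finrank k V = d) :
    (U ≠ V → KHom (XU U) (XU V) = ⊥) ∧ (KIso (XU U) (XU V) ↔ U = V) :=
  (hom_XU_XV_eq_bot_of_ne_general U V).imp_left fun h hne => h.mpr fun hle =>
    hne (Submodule.eq_of_le_of_finrank_eq hle (hU.trans hV.symm))
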